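/- Let f > 0. The symmetric bilinear form g(X,Y) = g₁(X₁,Y₁) + f²·(g₂(X₂,Y₂) − η(X₂)·η(Y₂)) + η̄(X)·η̄(Y) on W = V₁ × V₂ is positive definite: g(X,X) ≥ 0 for all X ∈ W, with equality only for X = 0. (The Riemannian-metric property implicitly asserted in Theorem 4.1 for the new warped product metric.) -/

import Mathlib

open scoped RealInnerProductSpace

/-! Compatibility with `φ` gives `η ⊗ η ≤ g₂`, so `g X X` is a sum of three nonnegative terms.
If it vanishes, then `X₁ = 0`, hence `η̄ X = 0` reduces to `η X₂ = 0`, and the vanishing of the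
middle term becomes `f ^ 2 * g₂ X₂ X₂ = 0`. -/

section WarpedForm

open LinearMap (BilinForm)

variable {R V₁ V₂ : Type*} [CommRing R] [AddCommGroup V₁] [Module R V₁]
  [AddCommGroup V₂] [Module R V₂]

/-- The warped product metric on `V₁ × V₂` with warping constant `f`, built from metrics `B₁`, `B₂`
and linear forms `θ`, `η`: the part of `B₂` transverse to `η` is rescaled by `f ^ 2`, and the square
of `η̄ = θ ∘ fst + η ∘ snd` is added. The paper has `θ = a • ω`. -/
def warpedForm (B₁ : BilinForm R V₁) (B₂ : BilinForm R V₂) (θ : V₁ →ₗ[R] R) (η : V₂ →ₗ[R] R)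
    (f : R) : BilinForm R (V₁ × V₂) :=
  B₁.compl₁₂ (.fst R V₁ V₂) (.fst R V₁ V₂) +
    f ^ 2 • (B₂ - BilinForm.linMulLin η η).compl₁₂ (.snd R V₁ V₂) (.snd R V₁ V₂) +
    BilinForm.linMulLin (θ.coprod η) (θ.coprod η)

theorem warpedForm_apply (B₁ : BilinForm R V₁) (B₂ : BilinForm R V₂) (θ : V₁ →ₗ[R] R)
    (η : V₂ →ₗ[R] R) (f : R) (X Y : V₁ × V₂) :
    warpedForm B₁ B₂ θ η f X Y = B₁ X.1 Y.1 + f ^ 2 * (B₂ X.2 Y.2 - η X.2 * η Y.2) +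
      (θ X.1 + η X.2) * (θ Y.1 + η Y.2) :=
  rfl

theorem toQuadraticMap_warpedForm (B₁ : BilinForm R V₁) (B₂ : BilinForm R V₂) (θ : V₁ →ₗ[R] R)
    (η : V₂ →ₗ[R] R) (f : R) :
    (warpedForm B₁ B₂ θ η f).toQuadraticMap =
      B₁.toQuadraticMap.prod (f ^ 2 • (B₂.toQuadraticMap - QuadraticMap.linMulLin η η)) +
        QuadraticMap.linMulLin (θ.coprod η) (θ.coprod η) :=
  rfl

variable [LinearOrder R] [IsStrictOrderedRing R]

theorem posDef_prod_add_linMulLin_coprod {Q₁ : QuadraticForm R V₁} {Q₂ : QuadraticForm R V₂}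
    {η : V₂ →ₗ[R] R} (hQ₁ : Q₁.PosDef) (hQ₂ : ∀ y, 0 ≤ Q₂ y)
    (hη : ∀ y, Q₂ y = 0 → η y = 0 → y = 0) (θ : V₁ →ₗ[R] R) :
    (Q₁.prod Q₂ + QuadraticMap.linMulLin (θ.coprod η) (θ.coprod η)).PosDef := by
  have hprod_nonneg : ∀ p, 0 ≤ Q₁.prod Q₂ p := QuadraticMap.nonneg_prod_iff.2 ⟨hQ₁.nonneg, hQ₂⟩
  have hsq_nonneg (p : V₁ × V₂) : 0 ≤ QuadraticMap.linMulLin (θ.coprod η) (θ.coprod η) p :=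
    mul_self_nonneg _
  refine QuadraticMap.posDef_of_nonneg (fun p => add_nonneg (hprod_nonneg p) (hsq_nonneg p)) ?_
  rintro ⟨x, y⟩ h
  obtain ⟨hprod, hsq⟩ := (add_eq_zero_iff_of_nonneg (hprod_nonneg _) (hsq_nonneg _)).1 h
  obtain ⟨hx, hy⟩ := (add_eq_zero_iff_of_nonneg (hQ₁.nonneg x) (hQ₂ y)).1 hprod
  obtain rfl : x = 0 := hQ₁.anisotropic x hx
  have hηy : η y = 0 := by simpa using hsq
  rw [hη y hy hηy, Prod.mk_zero_zero]

theorem stmt_15_general {B₁ : BilinForm R V₁} {B₂ : BilinForm R V₂} {η : V₂ →ₗ[R] R} {f : R}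
    (hB₁ : B₁.toQuadraticMap.PosDef) (hB₂ : B₂.toQuadraticMap.PosDef)
    (hη : ∀ y, η y * η y ≤ B₂ y y) (hf : f ≠ 0) (θ : V₁ →ₗ[R] R) :
    (warpedForm B₁ B₂ θ η f).toQuadraticMap.PosDef := by
  rw [toQuadraticMap_warpedForm]
  refine posDef_prod_add_linMulLin_coprod hB₁
    (fun y => mul_nonneg (sq_nonneg f) (sub_nonneg.2 (hη y))) (fun y hy hηy => ?_) θ
  have hB₂y : B₂ y y = 0 := by simpa [hf, hηy] using hy
  exact hB₂.anisotropic y hB₂y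

end WarpedForm

theorem posDef_toQuadraticMap_innerₗ (V : Type*) [NormedAddCommGroup V] [InnerProductSpace ℝ V] :
    (LinearMap.BilinMap.toQuadraticMap (innerₗ V)).PosDef :=
  fun _ hx => real_inner_self_pos.2 hx

/-- The new warped product metric
`g(X,Y) = g₁(X₁,Y₁) + f²·(g₂(X₂,Y₂) − η(X₂)η(Y₂)) + η̄(X)η̄(Y)` on `W = V₁ × V₂`
is positive definite (the Riemannian-metric property implicit in Theorem 4.1). -/
theorem stmt_15 {V₁ V₂ : Type*}
    [NormedAddCommGroup V₁] [InnerProductSpace ℝ V₁]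
    [NormedAddCommGroup V₂] [InnerProductSpace ℝ V₂]
    (ω : V₁ →ₗ[ℝ] ℝ) (a : ℝ)
    (φ : V₂ →ₗ[ℝ] V₂) (ξ : V₂) (η : V₂ →ₗ[ℝ] ℝ)
    (hφ2 : ∀ X : V₂, φ (φ X) = -X + η X • ξ)
    (hηξ : η ξ = 1)
    (hcompat : ∀ X Y : V₂, ⟪φ X, φ Y⟫ = ⟪X, Y⟫ - η X * η Y)
    (f : ℝ) (hf : 0 < f)
    (η' : V₁ × V₂ → ℝ)
    (hη' : ∀ (X₁ : V₁) (X₂ : V₂), η' (X₁, X₂) = a * ω X₁ + η X₂)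
    (g : V₁ × V₂ → V₁ × V₂ → ℝ)
    (hg : ∀ (X₁ : V₁) (X₂ : V₂) (Y₁ : V₁) (Y₂ : V₂),
      g (X₁, X₂) (Y₁, Y₂) = ⟪X₁, Y₁⟫ + f ^ 2 * (⟪X₂, Y₂⟫ - η X₂ * η Y₂)
        + η' (X₁, X₂) * η' (Y₁, Y₂)) :
    (∀ X : V₁ × V₂, 0 ≤ g X X) ∧ (∀ X : V₁ × V₂, g X X = 0 → X = 0) := by
  obtain rfl : g = fun X Y => warpedForm (innerₗ V₁) (innerₗ V₂) (a • ω) η f X Y := by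
    ext ⟨X₁, X₂⟩ ⟨Y₁, Y₂⟩
    simp [hg, hη', warpedForm_apply]
  have hη (X : V₂) : η X * η X ≤ ⟪X, X⟫ := sub_nonneg.1 (hcompat X X ▸ real_inner_self_nonneg)
  exact QuadraticMap.posDef_iff_nonneg.1 <| stmt_15_general
    (posDef_toQuadraticMap_innerₗ V₁) (posDef_toQuadraticMap_innerₗ V₂) hη hf.ne' (a • ω)
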